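/- Let a be a d×d real symmetric positive semidefinite matrix, Q and D d×d real symmetric positive definite matrices, r > 0, l > 0, and let G be a d×d real symmetric positive definite matrix with G Q⁻¹ G = r·l·D. Let μ be a Borel probability measure on ℝ^d × ℝ^d such that ∫ (r·x^T D x + l·u^T Q u) μ(dx,du) < ∞ and such that for every f ∈ C²_c(ℝ^d): ∫_{ℝ^d×ℝ^d} [ ½ Σ_{i,j} a_{ij} ∂²_{ij} f(x) + u·∇f(x) ] μ(dx,du) = 0. Then ∫_{ℝ^d×ℝ^d} (r·x^T D x + l·u^T Q u) μ(dx,du) ≥ Tr(aG). -/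

import Mathlib

open MeasureTheory Matrix

/-- Second partial derivative `∂²_{ij} f` of a function on `ℝ^d`. -/
noncomputable def secondPartial {d : ℕ} (f : (Fin d → ℝ) → ℝ) (i j : Fin d)
    (x : Fin d → ℝ) : ℝ :=
  fderiv ℝ (fun y => fderiv ℝ f y (Pi.single j 1)) x (Pi.single i 1)

open Filter Topology

lemma posDef_lower {d : ℕ} (D : Matrix (Fin d) (Fin d) ℝ) (hD : D.PosDef) :
    ∃ c : ℝ, 0 < c ∧ ∀ x : Fin d → ℝ, c * ‖x‖ ^ 2 ≤ x ⬝ᵥ (D *ᵥ x) := by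
  have hc : Continuous fun x : Fin d → ℝ => x ⬝ᵥ (D *ᵥ x) := by fun_prop
  obtain ⟨c, hc0, h⟩ := (isCompact_sphere (0 : Fin d → ℝ) 1).exists_forall_le'
    (a := (0 : ℝ)) hc.continuousOn (by
      intro x hx
      have hx0 : x ≠ 0 := by
        rintro rfl
        simp at hx
      simpa using hD.dotProduct_mulVec_pos hx0)
  refine ⟨c, hc0, fun x => ?_⟩
  by_cases hx : x = 0
  · simp [hx]
  have hn : 0 < ‖x‖ := norm_pos_iff.mpr hx
  have := h (‖x‖⁻¹ • x) (by simp [norm_smul, hn.ne'])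
  simp only [Matrix.mulVec_smul, smul_dotProduct, dotProduct_smul, smul_eq_mul] at this
  have h2 := mul_le_mul_of_nonneg_right this (sq_nonneg ‖x‖)
  calc _ ≤ _ := h2
    _ = _ := by field_simp

lemma pointwise_ineq {d : ℕ} (Q D G : Matrix (Fin d) (Fin d) ℝ)
    (hQ : Q.PosDef) (hG : G.PosDef) (r l : ℝ) (hl : 0 < l)
    (hGQ : G * Q⁻¹ * G = (r * l) • D) (x u : Fin d → ℝ) :
    0 ≤ r * (x ⬝ᵥ (D *ᵥ x)) + l * (u ⬝ᵥ (Q *ᵥ u)) + 2 * (x ⬝ᵥ (G *ᵥ u)) := by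
  have hdet : IsUnit Q.det := (Matrix.isUnit_iff_isUnit_det _).mp hQ.isUnit
  have hGt : Gᵀ = G := by
    have h : G.IsSymm := by simpa using hG.isHermitian
    exact h
  have hQt : Qᵀ = Q := by
    have h : Q.IsSymm := by simpa using hQ.isHermitian
    exact h
  have h := hQ.inv.posSemidef.dotProduct_mulVec_nonneg (l • (Q *ᵥ u) + G *ᵥ x)
  simp only [star_trivial] at h
  have e1 : (Q *ᵥ u) ⬝ᵥ (Q⁻¹ *ᵥ (Q *ᵥ u)) = u ⬝ᵥ (Q *ᵥ u) := by
    rw [Matrix.mulVec_mulVec, Matrix.nonsing_inv_mul _ hdet, Matrix.one_mulVec, dotProduct_comm]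
  have e2 : (G *ᵥ x) ⬝ᵥ (Q⁻¹ *ᵥ (Q *ᵥ u)) = x ⬝ᵥ (G *ᵥ u) := by
    rw [Matrix.mulVec_mulVec, Matrix.nonsing_inv_mul _ hdet, Matrix.one_mulVec,
      Matrix.dotProduct_mulVec, ← Matrix.mulVec_transpose, hGt]
  have e3 : (Q *ᵥ u) ⬝ᵥ (Q⁻¹ *ᵥ (G *ᵥ x)) = x ⬝ᵥ (G *ᵥ u) := by
    rw [Matrix.dotProduct_mulVec, ← Matrix.mulVec_transpose, Matrix.transpose_nonsing_inv, hQt,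
      dotProduct_comm, e2]
  have e4 : (G *ᵥ x) ⬝ᵥ (Q⁻¹ *ᵥ (G *ᵥ x)) = r * l * (x ⬝ᵥ (D *ᵥ x)) := by
    have : (G *ᵥ x) ⬝ᵥ (Q⁻¹ *ᵥ (G *ᵥ x)) = x ⬝ᵥ ((G * Q⁻¹ * G) *ᵥ x) := by
      rw [← Matrix.mulVec_mulVec, ← Matrix.mulVec_mulVec, Matrix.dotProduct_mulVec x G,
        ← Matrix.mulVec_transpose, hGt]
    rw [this, hGQ, Matrix.smul_mulVec, dotProduct_smul, smul_eq_mul]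
  simp only [Matrix.mulVec_add, Matrix.mulVec_smul, dotProduct_add, add_dotProduct,
    smul_dotProduct, dotProduct_smul, smul_eq_mul, e1, e2, e3, e4] at h
  have : 0 ≤ l * (r * (x ⬝ᵥ (D *ᵥ x)) + l * (u ⬝ᵥ (Q *ᵥ u)) + 2 * (x ⬝ᵥ (G *ᵥ u))) := by
    nlinarith [h]
  exact nonneg_of_mul_nonneg_right this hl

lemma fderiv_quad {d : ℕ} (G : Matrix (Fin d) (Fin d) ℝ) (hGt : Gᵀ = G) (x u : Fin d → ℝ) :
    fderiv ℝ (fun x : Fin d → ℝ => x ⬝ᵥ (G *ᵥ x)) x u = 2 * (x ⬝ᵥ (G *ᵥ u)) := by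
  have hd : DifferentiableAt ℝ (fun x : Fin d → ℝ => x ⬝ᵥ (G *ᵥ x)) x := by
    simp only [dotProduct, Matrix.mulVec]
    fun_prop
  have hs : u ⬝ᵥ (G *ᵥ x) = x ⬝ᵥ (G *ᵥ u) := by
    rw [Matrix.dotProduct_mulVec, ← Matrix.mulVec_transpose, hGt, dotProduct_comm]
  rw [← hd.lineDeriv_eq_fderiv]
  apply HasLineDerivAt.lineDeriv
  unfold HasLineDerivAt
  have : (fun t : ℝ => (x + t • u) ⬝ᵥ (G *ᵥ (x + t • u))) =
      fun t : ℝ => x ⬝ᵥ (G *ᵥ x) + t * (2 * (x ⬝ᵥ (G *ᵥ u))) + t ^ 2 * (u ⬝ᵥ (G *ᵥ u)) := by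
    funext t
    simp only [Matrix.mulVec_add, Matrix.mulVec_smul, dotProduct_add, add_dotProduct,
      smul_dotProduct, dotProduct_smul, smul_eq_mul, hs]
    ring
  rw [this]
  have h1 := (((hasDerivAt_id (0 : ℝ)).mul_const (2 * (x ⬝ᵥ (G *ᵥ u)))).const_add
    (x ⬝ᵥ (G *ᵥ x))).add (((hasDerivAt_id (0 : ℝ)).pow 2).mul_const (u ⬝ᵥ (G *ᵥ u)))
  convert h1 using 1
  · rfl
  · simp

lemma secondPartial_quad {d : ℕ} (G : Matrix (Fin d) (Fin d) ℝ) (hGt : Gᵀ = G) (i j : Fin d)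
    (x : Fin d → ℝ) :
    secondPartial (fun x : Fin d → ℝ => x ⬝ᵥ (G *ᵥ x)) i j x = 2 * G i j := by
  unfold secondPartial
  simp only [fderiv_quad G hGt]
  have : (fun y : Fin d → ℝ => 2 * (y ⬝ᵥ (G *ᵥ Pi.single j 1))) =
      (LinearMap.toContinuousLinearMap
        { toFun := fun y : Fin d → ℝ => 2 * (y ⬝ᵥ (G *ᵥ Pi.single j 1))
          map_add' := by intro a b; simp [add_dotProduct, mul_add]
          map_smul' := by intro a b; simp [smul_dotProduct]; ring } : (Fin d → ℝ) →L[ℝ] ℝ) := by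
    rfl
  rw [this, ContinuousLinearMap.fderiv]
  simp

/-- The truncated quadratic form. -/
lemma exists_trunc {d : ℕ} (G : Matrix (Fin d) (Fin d) ℝ) :
    ∃ F : (Fin d → ℝ) → ℝ, ContDiff ℝ 2 F ∧ HasCompactSupport F ∧
      F =ᶠ[𝓝 0] fun x => x ⬝ᵥ (G *ᵥ x) := by
  let b : ContDiffBump (0 : Fin d → ℝ) := ⟨1, 2, by norm_num, by norm_num⟩
  refine ⟨fun x => b x * (x ⬝ᵥ (G *ᵥ x)), ?_, ?_, ?_⟩
  · apply b.contDiff.mul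
    simp only [dotProduct, Matrix.mulVec]
    fun_prop
  · exact b.hasCompactSupport.mul_right
  · filter_upwards [b.eventuallyEq_one] with x hx
    simp [hx]

lemma fderiv_scale {d : ℕ} (F : (Fin d → ℝ) → ℝ) (c : ℝ) (hc : c ≠ 0)
    (x : Fin d → ℝ) :
    fderiv ℝ (fun y => (c⁻¹) ^ 2 * F (c • y)) x = c⁻¹ • fderiv ℝ F (c • x) := by
  have := fderiv_comp_smul (𝕜 := ℝ) (f := F) (x := x) c
  change fderiv ℝ ((c⁻¹) ^ 2 • (fun y => F (c • y))) x = _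
  rw [fderiv_const_smul_field, Pi.smul_apply, this, smul_smul]
  congr 1
  field_simp

lemma secondPartial_scale {d : ℕ} (F : (Fin d → ℝ) → ℝ) (c : ℝ) (hc : c ≠ 0)
    (i j : Fin d) (x : Fin d → ℝ) :
    secondPartial (fun y => (c⁻¹) ^ 2 * F (c • y)) i j x = secondPartial F i j (c • x) := by
  unfold secondPartial
  simp only [fderiv_scale F c hc]
  have := fderiv_comp_smul (𝕜 := ℝ) (f := fun y => fderiv ℝ F y (Pi.single j 1)) (x := x) c
  change fderiv ℝ (c⁻¹ • (fun y => fderiv ℝ F (c • y) (Pi.single j 1))) x _ = _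
  rw [fderiv_const_smul_field, Pi.smul_apply, this, smul_smul, inv_mul_cancel₀ hc, one_smul]

lemma continuous_secondPartial {d : ℕ} (F : (Fin d → ℝ) → ℝ) (hF : ContDiff ℝ 2 F)
    (i j : Fin d) : Continuous (secondPartial F i j) := by
  have h1 : ContDiff ℝ 1 (fderiv ℝ F) := hF.fderiv_right (by norm_num)
  have h2 : ContDiff ℝ 1 (fun y => fderiv ℝ F y (Pi.single j 1)) := h1.clm_apply contDiff_const
  have h3 := h2.continuous_fderiv (by norm_num)
  exact h3.clm_apply continuous_const

/-- **Sharp lower bound for time-average control with only regular control.**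
If `G ≻ 0` satisfies `G Q⁻¹ G = r·l·D` and the occupation measure `μ` on
`ℝ^d_x × ℝ^d_u` satisfies `∫ [½ Σ a_{ij}∂²_{ij}f(x) + u·∇f(x)] dμ = 0` for every
`f ∈ C²_c(ℝ^d)` with finite cost, then `∫ (r xᵀDx + l uᵀQu) dμ ≥ Tr(aG)`. -/
theorem regular_control_lower_bound {d : ℕ}
    (a Q D G : Matrix (Fin d) (Fin d) ℝ)
    (ha : a.PosSemidef) (hQ : Q.PosDef) (hD : D.PosDef) (hG : G.PosDef)
    (r l : ℝ) (hr : 0 < r) (hl : 0 < l)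
    (hGQ : G * Q⁻¹ * G = (r * l) • D)
    (μ : Measure ((Fin d → ℝ) × (Fin d → ℝ))) [IsProbabilityMeasure μ]
    (hμint : Integrable
      (fun p => r * (p.1 ⬝ᵥ (D *ᵥ p.1)) + l * (p.2 ⬝ᵥ (Q *ᵥ p.2))) μ)
    (hconstraint : ∀ f : (Fin d → ℝ) → ℝ, ContDiff ℝ 2 f → HasCompactSupport f →
      ∫ p, ((1/2 : ℝ) * ∑ i, ∑ j, a i j * secondPartial f i j p.1
          + fderiv ℝ f p.1 p.2) ∂μ = 0) :
    (∫ p, (r * (p.1 ⬝ᵥ (D *ᵥ p.1)) + l * (p.2 ⬝ᵥ (Q *ᵥ p.2))) ∂μ)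
      ≥ (a * G).trace := by
  have hGt : Gᵀ = G := by
    have h : G.IsSymm := by simpa using hG.isHermitian
    exact h
  obtain ⟨F, hF, hFc, hFe⟩ := exists_trunc G
  obtain ⟨cD, hcD, hD'⟩ := posDef_lower D hD
  obtain ⟨cQ, hcQ, hQ'⟩ := posDef_lower Q hQ
  set cost : (Fin d → ℝ) × (Fin d → ℝ) → ℝ :=
    fun p => r * (p.1 ⬝ᵥ (D *ᵥ p.1)) + l * (p.2 ⬝ᵥ (Q *ᵥ p.2)) with hcost
  -- first derivatives: Lipschitz
  have h1 : ContDiff ℝ 1 (fderiv ℝ F) := hF.fderiv_right (by norm_num)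
  obtain ⟨K, hK⟩ := h1.lipschitzWith_of_hasCompactSupport (hFc.fderiv ℝ) (by norm_num)
  have hF0 : fderiv ℝ F 0 = 0 := by
    rw [hFe.fderiv_eq]
    ext u
    rw [fderiv_quad G hGt]
    simp
  have hKb : ∀ y, ‖fderiv ℝ F y‖ ≤ K * ‖y‖ := by
    intro y
    have := hK.dist_le_mul y 0
    simpa [hF0] using this
  -- second derivatives: bounded
  set A : (Fin d → ℝ) → ℝ := fun x => (1/2 : ℝ) * ∑ i, ∑ j, a i j * secondPartial F i j x with hA
  have hAc : Continuous A := by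
    have := continuous_secondPartial F hF
    fun_prop
  have hsupp : ∀ i j, HasCompactSupport (secondPartial F i j) := by
    intro i j
    have h2 : HasCompactSupport (fun y => fderiv ℝ F y (Pi.single j 1)) := hFc.fderiv_apply ℝ _
    exact h2.fderiv_apply ℝ _
  have hAb : ∃ M, ∀ x, ‖A x‖ ≤ M := by
    have hb : ∀ i j, ∃ M, ∀ x, ‖secondPartial F i j x‖ ≤ M := fun i j =>
      (hsupp i j).exists_bound_of_continuous (continuous_secondPartial F hF i j)
    choose M hM using hb
    refine ⟨‖(1/2 : ℝ)‖ * ∑ i, ∑ j, ‖a i j‖ * M i j, fun x => ?_⟩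
    rw [hA, norm_mul]
    gcongr
    refine (norm_sum_le _ _).trans (Finset.sum_le_sum fun i _ => ?_)
    refine (norm_sum_le _ _).trans (Finset.sum_le_sum fun j _ => ?_)
    rw [norm_mul]
    gcongr
    exact hM i j x
  obtain ⟨M, hM⟩ := hAb
  have hA0 : A 0 = (a * G).trace := by
    have : ∀ i j, secondPartial F i j 0 = 2 * G i j := by
      intro i j
      rw [← secondPartial_quad G hGt i j 0]
      unfold secondPartial
      have : (fun y => fderiv ℝ F y (Pi.single j 1)) =ᶠ[𝓝 0]
          fun y => fderiv ℝ (fun x => x ⬝ᵥ (G *ᵥ x)) y (Pi.single j 1) := by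
        filter_upwards [hFe.fderiv (𝕜 := ℝ)] with y hy
        rw [hy]
      rw [this.fderiv_eq]
    simp only [hA, this, Matrix.trace, Matrix.diag, Matrix.mul_apply, Finset.mul_sum]
    refine Finset.sum_congr rfl fun i _ => Finset.sum_congr rfl fun j _ => ?_
    have : G i j = G j i := by conv_lhs => rw [← hGt, Matrix.transpose_apply]
    rw [this]
    ring
  let c : ℕ → ℝ := fun n => 1 / ((n : ℝ) + 1)
  have hc0 : ∀ n, 0 < c n := fun n => by positivity
  have hct : Tendsto c atTop (𝓝 0) := tendsto_one_div_add_atTop_nhds_zero_nat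
  let g : ℕ → (Fin d → ℝ) × (Fin d → ℝ) → ℝ :=
    fun n p => A (c n • p.1) + (c n)⁻¹ * fderiv ℝ F (c n • p.1) p.2
  have hg0 : ∀ n, ∫ p, g n p ∂μ = 0 := by
    intro n
    have h := hconstraint (fun y => ((c n)⁻¹) ^ 2 * F (c n • y)) (by fun_prop) (by
      have : HasCompactSupport (fun y => F (c n • y)) := hFc.comp_smul (hc0 n).ne'
      exact HasCompactSupport.mul_left (f := fun _ => ((c n)⁻¹) ^ 2) this)
    rw [← h]
    congr 1
    funext p
    simp only [secondPartial_scale F _ (hc0 n).ne', fderiv_scale F _ (hc0 n).ne', g, hA]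
    simp
  -- dominated convergence
  obtain ⟨C, hC0, hC⟩ : ∃ C : ℝ, 0 ≤ C ∧ ∀ p : (Fin d → ℝ) × (Fin d → ℝ),
      ‖p.1‖ * ‖p.2‖ ≤ C * cost p := by
    refine ⟨(r * cD)⁻¹ + (l * cQ)⁻¹, by positivity, fun p => ?_⟩
    have e1 := mul_le_mul_of_nonneg_left (hD' p.1) hr.le
    have e2 := mul_le_mul_of_nonneg_left (hQ' p.2) hl.le
    have n1 : 0 ≤ r * (cD * ‖p.1‖ ^ 2) := by positivity
    have n2 : 0 ≤ l * (cQ * ‖p.2‖ ^ 2) := by positivity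
    have f1 : ‖p.1‖ ^ 2 ≤ (r * cD)⁻¹ * cost p := by
      rw [inv_mul_eq_div, le_div_iff₀ (by positivity)]
      simp only [hcost]
      linarith
    have f2 : ‖p.2‖ ^ 2 ≤ (l * cQ)⁻¹ * cost p := by
      rw [inv_mul_eq_div, le_div_iff₀ (by positivity)]
      simp only [hcost]
      linarith
    nlinarith [sq_nonneg (‖p.1‖ - ‖p.2‖), sq_nonneg (‖p.1‖), sq_nonneg (‖p.2‖)]
  have hbound : ∀ n p, ‖g n p‖ ≤ M + K * (C * cost p) := by
    intro n p
    refine (norm_add_le _ _).trans (add_le_add (hM _) ?_)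
    rw [norm_mul]
    have hcn := hc0 n
    calc ‖(c n)⁻¹‖ * ‖fderiv ℝ F (c n • p.1) p.2‖
        ≤ (c n)⁻¹ * ((K * ‖c n • p.1‖) * ‖p.2‖) := by
          rw [Real.norm_of_nonneg (inv_nonneg.mpr hcn.le)]
          gcongr
          exact ((fderiv ℝ F (c n • p.1)).le_opNorm p.2).trans (by gcongr; exact hKb _)
      _ = K * (‖p.1‖ * ‖p.2‖) := by
          rw [norm_smul, Real.norm_of_nonneg hcn.le]
          field_simp
      _ ≤ K * (C * cost p) := by
          exact mul_le_mul_of_nonneg_left (hC p) K.2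
  have hbi : Integrable (fun p => M + K * (C * cost p)) μ :=
    (integrable_const M).add ((hμint.const_mul C).const_mul _)
  have hlim : ∀ p, Tendsto (fun n => g n p) atTop
      (𝓝 ((a * G).trace + 2 * (p.1 ⬝ᵥ (G *ᵥ p.2)))) := by
    intro p
    have hs : Tendsto (fun n => c n • p.1) atTop (𝓝 0) := by
      simpa using hct.smul_const p.1
    refine Tendsto.add ?_ ?_
    · rw [← hA0]
      exact (hAc.tendsto 0).comp hs
    · refine tendsto_const_nhds.congr' ?_
      filter_upwards [hs.eventually (hFe.fderiv (𝕜 := ℝ))] with n hn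
      have hcn := (hc0 n).ne'
      rw [hn, fderiv_quad G hGt, smul_dotProduct, smul_eq_mul]
      field_simp
  have hgm : ∀ n, AEStronglyMeasurable (g n) μ := by
    intro n
    have hfc := h1.continuous
    have : Continuous (g n) := by
      simp only [g]
      fun_prop
    exact this.aestronglyMeasurable
  have hT := tendsto_integral_of_dominated_convergence (μ := μ) _ hgm hbi
    (fun n => Eventually.of_forall (hbound n)) (Eventually.of_forall hlim)
  have hzero : ∫ p, ((a * G).trace + 2 * (p.1 ⬝ᵥ (G *ᵥ p.2))) ∂μ = 0 := by
    refine tendsto_nhds_unique hT ?_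
    simp only [hg0]
    exact tendsto_const_nhds
  have hli : Integrable (fun p : (Fin d → ℝ) × (Fin d → ℝ) =>
      (a * G).trace + 2 * (p.1 ⬝ᵥ (G *ᵥ p.2))) μ := by
    refine hbi.mono' (Continuous.aestronglyMeasurable (by fun_prop)) (Eventually.of_forall ?_)
    intro p
    exact le_of_tendsto (hlim p).norm (Eventually.of_forall fun n => hbound n p)
  have hfin : (a * G).trace ≤ ∫ p, (cost p + ((a * G).trace + 2 * (p.1 ⬝ᵥ (G *ᵥ p.2)))) ∂μ := by
    have : ∫ p : (Fin d → ℝ) × (Fin d → ℝ), (a * G).trace ∂μ = (a * G).trace := by simp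
    rw [← this]
    refine integral_mono (integrable_const _) ?_ ?_
    · rw [this]
      exact hμint.add hli
    · intro p
      rw [this]
      have := pointwise_ineq Q D G hQ hG r l hl hGQ p.1 p.2
      simp only [hcost]
      linarith
  rw [integral_add hμint hli, hzero, add_zero] at hfin
  exact hfin
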